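/- arXiv:2209.05028 — 2 statements merged into one kernel-verified Lean document; each statement's English description precedes it below -/
import Mathlib

section
/- In the multinomial assignment setting, if m(n)·n^{-2}/log n → ∞ as n → ∞, then E[max_{σ ∈ S_n} Σ_{i=1}^n X_{iσ(i)}] = (m(n)/n)(1+o(1)); that is, (n/m(n))·E[max_{σ} Σ_{i=1}^n X_{iσ(i)}] → 1 as n → ∞. -/
open MeasureTheory Filter Real

noncomputable section

/-- The uniform measure on the `n × n` grid of cells. -/
def cellMeasure (n : ℕ) : Measure (Fin n × Fin n) :=
  ((n : ENNReal) ^ 2)⁻¹ • Measure.count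

/-- The law of `m` i.i.d. points, each uniformly distributed on the `n × n` grid;
under this measure the matrix of cell counts is multinomial `M(m, n²)`. -/
def gridMeasure (m n : ℕ) : Measure (Fin m → Fin n × Fin n) :=
  Measure.pi fun _ => cellMeasure n

/-- `X_{ij}`: the number of the `m` points falling in cell `(i, j)`. -/
def cellCount {m n : ℕ} (i j : Fin n) (ω : Fin m → Fin n × Fin n) : ℕ :=
  (Finset.univ.filter fun k => ω k = (i, j)).card

/-- The assignment sum `S(σ) = ∑ i, X_{i σ(i)}`. -/
def assignSum {m n : ℕ} (σ : Equiv.Perm (Fin n)) (ω : Fin m → Fin n × Fin n) : ℝ :=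
  ∑ i, (cellCount i (σ i) ω : ℝ)

/-- `max_{σ ∈ S_n} S(σ)`. -/
def maxAssign {m n : ℕ} (ω : Fin m → Fin n × Fin n) : ℝ :=
  ⨆ σ : Equiv.Perm (Fin n), assignSum σ ω

/-- `E[max_{σ ∈ S_n} S(σ)]`. -/
def EmaxAssign (m n : ℕ) : ℝ :=
  ∫ ω, maxAssign ω ∂(gridMeasure m n)

/-!
Each `S(σ)` counts the points falling in the graph of `σ`, hence is binomial with parameters `m`
and `1 / n`. The lower bound is `E[max_σ S(σ)] ≥ E[S(1)] = m / n`. For the upper bound, Jensen's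
inequality for `exp` and a union over the `n!` permutations give, for every real `t`,
`t E[max_σ S(σ)] ≤ log n! + m (exp t - 1) / n`. Taking `t = √(n² log n / m)`, which tends to `0`,
balances the two error terms and yields `E[max_σ S(σ)] ≤ (m / n) (1 + 2 t)`.
-/

open ProbabilityTheory

section MaximalInequality

variable {Ω ι : Type*} [MeasurableSpace Ω] {μ : Measure Ω} {X : ι → Ω → ℝ}

lemma norm_iSup_le_sum_norm [Fintype ι] (x : ι → ℝ) : ‖⨆ i, x i‖ ≤ ∑ i, ‖x i‖ := by
  cases isEmpty_or_nonempty ι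
  · simp
  obtain ⟨i, hi⟩ := exists_eq_ciSup_of_finite (f := x)
  rw [← hi]
  exact Finset.single_le_sum (f := fun i ↦ ‖x i‖) (fun _ _ ↦ norm_nonneg _) (Finset.mem_univ i)

lemma integrable_iSup [Finite ι] (hX : ∀ i, Integrable (X i) μ) :
    Integrable (fun ω ↦ ⨆ i, X i ω) μ :=
  have := Fintype.ofFinite ι
  (integrable_finsetSum _ fun i _ ↦ (hX i).norm).mono'
    (AEMeasurable.iSup fun i ↦ (hX i).aemeasurable).aestronglyMeasurable
    (.of_forall fun ω ↦ norm_iSup_le_sum_norm fun i ↦ X i ω)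

lemma exp_mul_iSup_le_sum_exp [Fintype ι] [Nonempty ι] (x : ι → ℝ) (t : ℝ) :
    exp (t * ⨆ i, x i) ≤ ∑ i, exp (t * x i) := by
  obtain ⟨i, hi⟩ := exists_eq_ciSup_of_finite (f := x)
  rw [← hi]
  exact Finset.single_le_sum (f := fun i ↦ exp (t * x i)) (fun _ _ ↦ (exp_pos _).le)
    (Finset.mem_univ i)

theorem mul_integral_iSup_le_log_sum_mgf [Fintype ι] [Nonempty ι] [IsProbabilityMeasure μ]
    {t : ℝ} (hX : ∀ i, Integrable (X i) μ)
    (hexp : ∀ i, Integrable (fun ω ↦ exp (t * X i ω)) μ) :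
    t * ∫ ω, ⨆ i, X i ω ∂μ ≤ log (∑ i, mgf (X i) μ t) := by
  have hsup : Integrable (fun ω ↦ t * ⨆ i, X i ω) μ := (integrable_iSup hX).const_mul t
  have hsum : Integrable (fun ω ↦ ∑ i, exp (t * X i ω)) μ :=
    integrable_finsetSum _ fun i _ ↦ hexp i
  have hle (ω : Ω) := exp_mul_iSup_le_sum_exp (fun i ↦ X i ω) t
  have hexpsup : Integrable (fun ω ↦ exp (t * ⨆ i, X i ω)) μ :=
    hsum.mono' (continuous_exp.comp_aestronglyMeasurable hsup.aestronglyMeasurable)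
      (.of_forall fun ω ↦ by simpa only [norm_eq_abs, abs_exp] using hle ω)
  have hmgf : exp (t * ∫ ω, ⨆ i, X i ω ∂μ) ≤ ∑ i, mgf (X i) μ t :=
    calc exp (t * ∫ ω, ⨆ i, X i ω ∂μ)
        = exp (∫ ω, t * ⨆ i, X i ω ∂μ) := by rw [integral_const_mul]
      _ ≤ ∫ ω, exp (t * ⨆ i, X i ω) ∂μ :=
        convexOn_exp.map_integral_le continuous_exp.continuousOn isClosed_univ
          (.of_forall fun _ ↦ Set.mem_univ _) hsup hexpsup
      _ ≤ ∫ ω, ∑ i, exp (t * X i ω) ∂μ := integral_mono hexpsup hsum hle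
      _ = ∑ i, mgf (X i) μ t := integral_finsetSum _ fun i _ ↦ hexp i
  exact (le_log_iff_exp_le ((exp_pos _).trans_le hmgf)).2 hmgf

end MaximalInequality

section HitCount

variable {ι α : Type*} [Fintype ι]

/-- The number of points of the sample `ω` falling in `A`, as a real number. -/
def hitCount (A : Set α) (ω : ι → α) : ℝ :=
  ∑ k, A.indicator 1 (ω k)

variable [MeasurableSpace α] {μ : Measure α} [IsProbabilityMeasure μ] {A : Set α}

lemma integral_hitCount (hA : MeasurableSet A) :
    ∫ ω, hitCount A ω ∂(Measure.pi fun _ : ι ↦ μ) = Fintype.card ι * μ.real A := by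
  have hint : Integrable (A.indicator (1 : α → ℝ)) μ := (integrable_const 1).indicator hA
  have hpoint (k : ι) : ∫ ω : ι → α, A.indicator 1 (ω k) ∂(Measure.pi fun _ ↦ μ) = μ.real A :=
    (integral_comp_eval (μ := fun _ ↦ μ) hint.aestronglyMeasurable).trans
      (integral_indicator_one hA)
  simp only [hitCount]
  rw [integral_finsetSum _ fun k _ ↦ integrable_comp_eval hint]
  simp only [hpoint, Finset.sum_const, Finset.card_univ, nsmul_eq_mul]

lemma integral_exp_mul_indicator_one (hA : MeasurableSet A) (t : ℝ) :
    ∫ x, exp (t * A.indicator 1 x) ∂μ = 1 + μ.real A * (exp t - 1) := by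
  have hexp (x : α) : exp (t * A.indicator 1 x) = 1 + A.indicator (fun _ ↦ exp t - 1) x := by
    by_cases hx : x ∈ A <;> simp [hx]
  simp only [hexp]
  rw [integral_add (integrable_const 1) ((integrable_const _).indicator hA),
    integral_indicator_const _ hA]
  simp

lemma mgf_hitCount (hA : MeasurableSet A) (t : ℝ) :
    mgf (hitCount A) (Measure.pi fun _ : ι ↦ μ) t
      = (1 + μ.real A * (exp t - 1)) ^ Fintype.card ι := by
  simp only [mgf, hitCount, Finset.mul_sum, exp_sum]
  rw [integral_fintype_prod_eq_pow fun x ↦ exp (t * A.indicator 1 x),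
    integral_exp_mul_indicator_one hA]

lemma mgf_hitCount_le (hA : MeasurableSet A) (t : ℝ) :
    mgf (hitCount A) (Measure.pi fun _ : ι ↦ μ) t
      ≤ exp (Fintype.card ι * (μ.real A * (exp t - 1))) := by
  rw [mgf_hitCount hA, exp_nat_mul, add_comm]
  refine pow_le_pow_left₀ ?_ (add_one_le_exp _) _
  rw [add_comm, ← integral_exp_mul_indicator_one hA]
  exact integral_nonneg fun _ ↦ (exp_pos _).le

end HitCount

section Assignment

variable {m n : ℕ}

/-- The cells `(i, σ(i))` selected by the assignment `σ`, so that `S(σ)` is the number of sample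
points falling in this set. -/
def permGraph (σ : Equiv.Perm (Fin n)) : Set (Fin n × Fin n) :=
  {x | x.2 = σ x.1}

lemma assignSum_eq_hitCount (σ : Equiv.Perm (Fin n)) :
    assignSum (m := m) σ = hitCount (permGraph σ) := by
  funext ω
  simp only [assignSum, cellCount, hitCount, Finset.card_filter, Nat.cast_sum]
  rw [Finset.sum_comm]
  refine Finset.sum_congr rfl fun k _ ↦ ?_
  simp [Prod.ext_iff, permGraph, Set.indicator_apply, ite_and, eq_comm]

lemma ncard_permGraph (σ : Equiv.Perm (Fin n)) : (permGraph σ).ncard = n := by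
  have hrange : permGraph σ = Set.range fun i ↦ (i, σ i) := by
    ext ⟨i, j⟩
    simp [permGraph, eq_comm]
  rw [hrange, Set.ncard_range_of_injective fun i j h ↦ congrArg Prod.fst h, Nat.card_fin]

lemma cellMeasure_eq_uniformOn_univ : cellMeasure n = uniformOn Set.univ := by
  simp [cellMeasure, uniformOn, ProbabilityTheory.cond, sq]

lemma cellMeasure_real_apply (A : Set (Fin n × Fin n)) :
    (cellMeasure n).real A = A.ncard / (n : ℝ) ^ 2 := by
  rw [cellMeasure, measureReal_ennreal_smul_apply, measureReal_def,
    Measure.count_apply A.toFinite.measurableSet, ← A.toFinite.cast_ncard_eq]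
  simp only [ENat.toENNReal_coe, ENNReal.toReal_inv, ENNReal.toReal_pow, ENNReal.toReal_natCast,
    div_eq_inv_mul]

variable [NeZero n]

instance isProbabilityMeasure_cellMeasure : IsProbabilityMeasure (cellMeasure n) := by
  rw [cellMeasure_eq_uniformOn_univ]
  infer_instance

instance isProbabilityMeasure_gridMeasure : IsProbabilityMeasure (gridMeasure m n) :=
  inferInstanceAs (IsProbabilityMeasure (Measure.pi _))

lemma cellMeasure_real_permGraph (σ : Equiv.Perm (Fin n)) :
    (cellMeasure n).real (permGraph σ) = (n : ℝ)⁻¹ := by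
  have hn : (n : ℝ) ≠ 0 := NeZero.ne _
  rw [cellMeasure_real_apply, ncard_permGraph]
  field_simp

lemma integral_assignSum (σ : Equiv.Perm (Fin n)) :
    ∫ ω, assignSum σ ω ∂(gridMeasure m n) = m / n := by
  rw [assignSum_eq_hitCount, gridMeasure, integral_hitCount (permGraph σ).toFinite.measurableSet,
    cellMeasure_real_permGraph, Fintype.card_fin, div_eq_mul_inv]

lemma mgf_assignSum_le (σ : Equiv.Perm (Fin n)) (t : ℝ) :
    mgf (assignSum σ) (gridMeasure m n) t ≤ exp (m * (exp t - 1) / n) := by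
  rw [assignSum_eq_hitCount, gridMeasure]
  refine (mgf_hitCount_le (permGraph σ).toFinite.measurableSet t).trans_eq ?_
  rw [cellMeasure_real_permGraph, Fintype.card_fin]
  ring_nf

theorem div_le_EmaxAssign : (m : ℝ) / n ≤ EmaxAssign m n := by
  rw [← integral_assignSum (m := m) (1 : Equiv.Perm (Fin n))]
  exact integral_mono .of_finite .of_finite fun ω ↦
    le_ciSup (f := fun σ ↦ assignSum σ ω) (Set.finite_range _).bddAbove 1

theorem mul_EmaxAssign_le (t : ℝ) :
    t * EmaxAssign m n ≤ log n.factorial + m * (exp t - 1) / n :=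
  calc t * EmaxAssign m n
      ≤ log (∑ σ : Equiv.Perm (Fin n), mgf (assignSum σ) (gridMeasure m n) t) :=
        mul_integral_iSup_le_log_sum_mgf (fun _ ↦ .of_finite) fun _ ↦ .of_finite
    _ ≤ log (∑ _σ : Equiv.Perm (Fin n), exp (m * (exp t - 1) / n)) :=
        log_le_log (Finset.sum_pos (fun _ _ ↦ mgf_pos .of_finite) Finset.univ_nonempty)
          (Finset.sum_le_sum fun σ _ ↦ mgf_assignSum_le σ t)
    _ = log n.factorial + m * (exp t - 1) / n := by
        rw [Finset.sum_const, Finset.card_univ, Fintype.card_perm, Fintype.card_fin, nsmul_eq_mul,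
          log_mul (by positivity) (exp_ne_zero _), log_exp]

end Assignment

lemma log_factorial_le_mul_log (n : ℕ) : log n.factorial ≤ n * log n := by
  rw [← log_pow]
  exact log_le_log (by positivity) (by exact_mod_cast Nat.factorial_le_pow n)

lemma exp_sub_one_le_add_sq {t : ℝ} (ht : |t| ≤ 1) : exp t - 1 ≤ t + t ^ 2 := by
  linarith [le_of_abs_le (abs_exp_sub_one_sub_id_le ht)]

theorem EmaxAssign_le {m n : ℕ} (hn : 1 < n) (hm : (n : ℝ) ^ 2 * log n ≤ m) :
    EmaxAssign m n ≤ m / n * (1 + 2 * √((n : ℝ) ^ 2 * log n / m)) := by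
  have : NeZero n := ⟨by omega⟩
  have hlog : 0 < log n := log_pos (by exact_mod_cast hn)
  have hm0 : (0 : ℝ) < m := lt_of_lt_of_le (by positivity) hm
  set t : ℝ := √((n : ℝ) ^ 2 * log n / m) with ht_def
  have ht0 : 0 < t := by positivity
  have ht1 : |t| ≤ 1 := by
    rw [abs_of_pos ht0]
    exact sqrt_le_one.2 ((div_le_one hm0).2 hm)
  have hentropy : n * log n = m / n * t ^ 2 := by
    rw [ht_def, sq_sqrt (by positivity)]
    field_simp
  refine le_of_mul_le_mul_left ?_ ht0
  calc t * EmaxAssign m n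
      ≤ log n.factorial + m * (exp t - 1) / n := mul_EmaxAssign_le t
    _ ≤ n * log n + m * (t + t ^ 2) / n := by
        gcongr
        · exact log_factorial_le_mul_log n
        · exact exp_sub_one_le_add_sq ht1
    _ = t * (m / n * (1 + 2 * t)) := by
        rw [hentropy]
        ring

/-- **Quasi-Gaussian zone, maxima.**  If `m(n) n⁻² / log n → ∞`, then
`E[max_σ ∑ i, X_{i σ(i)}] = (m(n)/n) (1 + o(1))`. -/
theorem expected_max_quasiGaussian (m : ℕ → ℕ) (hm : ∀ n, 0 < m n)
    (h : Tendsto (fun n : ℕ => ((m n : ℝ) / (n : ℝ) ^ 2) / Real.log n) atTop atTop) :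
    Tendsto (fun n : ℕ => ((n : ℝ) / (m n : ℝ)) * EmaxAssign (m n) n) atTop (nhds 1) := by
  have hδ : Tendsto (fun n : ℕ ↦ (n : ℝ) ^ 2 * log n / m n) atTop (nhds 0) :=
    h.inv_tendsto_atTop.congr fun n ↦ by simp only [Pi.inv_apply, div_div, inv_div]
  have hbound : Tendsto (fun n : ℕ ↦ 1 + 2 * √((n : ℝ) ^ 2 * log n / m n)) atTop (nhds 1) := by
    simpa using (hδ.sqrt.const_mul 2).const_add 1
  have hm0 (n : ℕ) : (0 : ℝ) < m n := by exact_mod_cast hm n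
  refine tendsto_of_tendsto_of_tendsto_of_le_of_le' tendsto_const_nhds hbound ?_ ?_
  · filter_upwards [eventually_gt_atTop 0] with n hn
    have : NeZero n := ⟨hn.ne'⟩
    have hn0 : (0 : ℝ) < n := by exact_mod_cast hn
    rw [← inv_div, ← div_eq_inv_mul, one_le_div (div_pos (hm0 n) hn0)]
    exact div_le_EmaxAssign
  · filter_upwards [eventually_gt_atTop 1, hδ.eventually_le_const one_pos] with n hn hδn
    have hn0 : (0 : ℝ) < n := by positivity
    rw [← inv_div, ← div_eq_inv_mul, div_le_iff₀' (div_pos (hm0 n) hn0)]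
    exact EmaxAssign_le hn ((div_le_one (hm0 n)).1 hδn)

end
end

section
/- In the multinomial assignment setting, let c > 1 and suppose m(n)·n^{-2}/log n → c as n → ∞. Let H̃* = H̃*(c) be the unique real number H with 0 < H < 1 satisfying H log H − (H − 1) = 1/c. Then E[min_{σ ∈ S_n} Σ_{i=1}^n X_{iσ(i)}] = c·H̃*·n·log n·(1+o(1)); that is, E[min_σ Σ_i X_{iσ(i)}]/(c·H̃*·n·log n) → 1 as n → ∞. -/
open MeasureTheory Filter Real

noncomputable section

/-- `min_{σ ∈ S_n} S(σ)`. -/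
def minAssign {m n : ℕ} (ω : Fin m → Fin n × Fin n) : ℝ :=
  ⨅ σ : Equiv.Perm (Fin n), assignSum σ ω

/-- `E[min_{σ ∈ S_n} S(σ)]`. -/
def EminAssign (m n : ℕ) : ℝ :=
  ∫ ω, minAssign ω ∂(gridMeasure m n)

/-!
The lower bound is a first moment estimate. For a fixed `σ` the sum `S(σ)` counts the points on the
graph of `σ`, so it is binomial with success probability `1 / n`; Jensen's inequality for
`exp (t * ·)` and a sum over all `n!` permutations give
`exp (t * E[min S]) ≤ n ^ n * exp (-(m / n) * (1 - exp t))`, and `t = log H̃*` is optimal.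

For the upper bound take `H̃* < η < 1`. At the cost of a factor `e √m` the counts `X_{ij}` may be
treated as independent Poisson variables of mean `m / n ^ 2 ≈ c log n`. The chance that one of them
equals `T = ⌊η c log n⌋` is `n ^ (-c (η log η + 1 - η) + o(1))`, whose exponent exceeds `-1` by the
definition of `H̃*`. Hence the bipartite graph `{X_{ij} ≤ T}` is dense enough that, by Hall's
theorem and a union bound over the obstructions, it has a perfect matching except with negligible
probability, and such a matching has cost at most `n T`.
-/

open ProbabilityTheory InformationTheory
open scoped Finset Nat NNReal Topology

lemma poissonMeasure_real_Ioi_le (r : ℝ≥0) (T : ℕ) :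
    Po(r).real (Set.Ioi T) ≤ exp (-Po(r).real {T}) :=
  calc Po(r).real (Set.Ioi T) ≤ Po(r).real {T}ᶜ := measureReal_mono fun _ hk => ne_of_gt hk
    _ = 1 - Po(r).real {T} := probReal_compl_eq_one_sub (measurableSet_singleton T)
    _ ≤ exp (-Po(r).real {T}) := one_sub_le_exp_neg _

lemma inv_le_poissonMeasure_real_singleton_self {m : ℕ} (hm : m ≠ 0) :
    (exp 1 * √m)⁻¹ ≤ Po(m).real {m} := by
  obtain ⟨k, rfl⟩ := Nat.exists_eq_succ_of_ne_zero hm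
  have stirling : Stirling.stirlingSeq (k + 1) ≤ exp 1 / √2 := by
    simpa using Stirling.stirlingSeq'_antitone (Nat.zero_le k)
  have poisson_eq : Po((k + 1 : ℕ)).real {k + 1} =
      (√2 * √(k + 1 : ℕ) * Stirling.stirlingSeq (k + 1))⁻¹ := by
    rw [poissonMeasure_real_singleton, Stirling.stirlingSeq, NNReal.coe_natCast,
      Real.sqrt_mul zero_le_two, div_pow, ← exp_nat_mul, mul_one, exp_neg]
    field_simp
  rw [Nat.succ_eq_add_one, poisson_eq]
  have := Stirling.stirlingSeq'_pos k
  refine inv_anti₀ (by positivity) ?_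
  calc √2 * √(k + 1 : ℕ) * Stirling.stirlingSeq (k + 1)
      ≤ √2 * √(k + 1 : ℕ) * (exp 1 / √2) := by gcongr
    _ = exp 1 * √(k + 1 : ℕ) := by field_simp

lemma prod_poissonMeasure_real_singleton {K : Type*} [Fintype K] [Nonempty K] (r : ℝ≥0)
    (x : K → ℕ) :
    ∏ c, Po(r).real {x c} = Nat.multinomial Finset.univ x / (Fintype.card K : ℝ) ^ (∑ c, x c) *
      Po(Fintype.card K * r).real {∑ c, x c} := by
  have factorial_sum : ((∑ c, x c)! : ℝ) = (∏ c, ((x c)! : ℝ)) * Nat.multinomial Finset.univ x := by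
    exact_mod_cast (Nat.multinomial_spec Finset.univ x).symm
  have multinomial_ne : (Nat.multinomial Finset.univ x : ℝ) ≠ 0 :=
    Nat.cast_ne_zero.2 (Nat.multinomial_pos _ _).ne'
  simp only [poissonMeasure_real_singleton, Finset.prod_div_distrib, Finset.prod_mul_distrib,
    Finset.prod_pow_eq_pow_sum, Finset.prod_const, Finset.card_univ, NNReal.coe_mul,
    NNReal.coe_natCast, ← exp_nat_mul, mul_pow, factorial_sum]
  field_simp

section Poissonization

variable {ι K : Type*} [Fintype ι] [DecidableEq K]

/-- The occupancy numbers of the allocation `ω` of the points `ι` to the cells `K`; for uniform `ω`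
these are multinomial, and `cellCount` is the case of the `n × n` grid. -/
def occupancy (ω : ι → K) (c : K) : ℕ := #{k | ω k = c}

variable [Fintype K]

lemma sum_occupancy (ω : ι → K) : ∑ c, occupancy ω c = Fintype.card ι :=
  (Finset.card_eq_sum_card_fiberwise fun _ _ => Finset.mem_univ _).symm

lemma prod_comp_eq_prod_pow_occupancy {M : Type*} [CommMonoid M] (f : K → M) (ω : ι → K) :
    ∏ k, f (ω k) = ∏ c, f c ^ occupancy ω c := by
  rw [← Finset.prod_fiberwise Finset.univ ω]
  refine Finset.prod_congr rfl fun c _ => Finset.prod_eq_pow_card fun k hk => ?_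
  rw [(Finset.mem_filter.1 hk).2]

/- Both sides are the coefficient of the monomial with exponents `x` in `(∑ c, X c) ^ card ι`,
expanded over functions and by the multinomial theorem respectively. -/
lemma card_occupancy_eq [DecidableEq ι] {x : K → ℕ} (hx : ∑ c, x c = Fintype.card ι) :
    #{ω : ι → K | occupancy ω = x} = Nat.multinomial Finset.univ x := by
  have prod_X_pow (y : K → ℕ) : ∏ c, (MvPolynomial.X c : MvPolynomial K ℕ) ^ y c =
      MvPolynomial.monomial (Finsupp.equivFunOnFinite.symm y) 1 := by
    simp [MvPolynomial.monomial_eq, Finsupp.prod_fintype]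
  have expansion : ∑ ω : ι → K, ∏ k, (MvPolynomial.X (ω k) : MvPolynomial K ℕ) =
      (∑ c : K, (MvPolynomial.X c : MvPolynomial K ℕ)) ^ Fintype.card ι := by
    rw [← Fintype.piFinset_univ, Finset.sum_prod_piFinset, Finset.prod_const, Finset.card_univ]
  have coeff_eq := congrArg (MvPolynomial.coeff (Finsupp.equivFunOnFinite.symm x)) expansion
  simp_rw [Finset.sum_pow_eq_sum_piAntidiag, prod_comp_eq_prod_pow_occupancy, prod_X_pow,
    MvPolynomial.coeff_sum, ← MvPolynomial.C_eq_coe_nat, MvPolynomial.coeff_C_mul,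
    MvPolynomial.coeff_monomial, Equiv.apply_eq_iff_eq] at coeff_eq
  rw [Finset.card_filter, coeff_eq, Finset.sum_eq_single_of_mem x (by simp [hx])]
  · simp
  · intro y _ hy
    simp [hy]

lemma card_occupancy_mem [DecidableEq ι] (B : Set (K → ℕ)) [DecidablePred (· ∈ B)] :
    #{ω : ι → K | occupancy ω ∈ B} =
      ∑ x ∈ Finset.piAntidiag Finset.univ (Fintype.card ι) with x ∈ B,
        Nat.multinomial Finset.univ x := by
  rw [Finset.card_eq_sum_card_fiberwise (f := occupancy)
    (t := {x ∈ Finset.piAntidiag Finset.univ (Fintype.card ι) | x ∈ B})]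
  · refine Finset.sum_congr rfl fun x hx => ?_
    obtain ⟨hsum, hxB⟩ := Finset.mem_filter.1 hx
    rw [← card_occupancy_eq (Finset.mem_piAntidiag.1 hsum).1, Finset.filter_filter]
    refine congrArg Finset.card (Finset.filter_congr fun ω _ => ?_)
    exact and_iff_right_of_imp fun h => h ▸ hxB
  · intro ω hω
    simpa [sum_occupancy] using hω

variable [MeasurableSpace K] [MeasurableSingletonClass K] [Nonempty K]

/- Conditioned on their sum, independent Poisson variables are multinomial. -/
lemma uniformOn_real_occupancy_mem_mul (B : Set (K → ℕ)) (r : ℝ≥0) :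
    (uniformOn (Set.univ : Set (ι → K))).real {ω | occupancy ω ∈ B} *
        Po(Fintype.card K * r).real {Fintype.card ι} =
      (Measure.pi fun _ : K => Po(r)).real {x | ∑ c, x c = Fintype.card ι ∧ x ∈ B} := by
  classical
  let D : Finset (K → ℕ) := {x ∈ Finset.piAntidiag Finset.univ (Fintype.card ι) | x ∈ B}
  have uniform_eq : (uniformOn (Set.univ : Set (ι → K))).real {ω | occupancy ω ∈ B} =
      (∑ x ∈ D, Nat.multinomial Finset.univ x : ℕ) / (Fintype.card K : ℝ) ^ Fintype.card ι := by
    rw [← card_occupancy_mem, measureReal_def, uniformOn_univ, Measure.count_apply_finite _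
      (Set.toFinite _)]
    simp
  have set_eq : {x : K → ℕ | ∑ c, x c = Fintype.card ι ∧ x ∈ B} = D := by
    ext x
    simp [D]
  rw [uniform_eq, set_eq, ← sum_measureReal_singleton, Nat.cast_sum, Finset.sum_div,
    Finset.sum_mul]
  refine Finset.sum_congr rfl fun x hx => ?_
  have sum_eq : ∑ c, x c = Fintype.card ι := by
    simpa using (Finset.mem_piAntidiag.1 (Finset.mem_filter.1 hx).1).1
  have pi_eq : (Measure.pi fun _ : K => Po(r)).real {x} = ∏ c, Po(r).real {x c} := by
    simp only [measureReal_def, Measure.pi_singleton, ENNReal.toReal_prod]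
  rw [pi_eq, prod_poissonMeasure_real_singleton, sum_eq]

lemma uniformOn_real_forall_occupancy_mem_mul_le (A : K → Set ℕ) (r : ℝ≥0) :
    (uniformOn (Set.univ : Set (ι → K))).real {ω | ∀ c, occupancy ω c ∈ A c} *
        Po(Fintype.card K * r).real {Fintype.card ι} ≤ ∏ c, Po(r).real (A c) := by
  have h := uniformOn_real_occupancy_mem_mul (ι := ι) (Set.univ.pi A) r
  simp only [Set.mem_univ_pi] at h
  rw [h]
  calc (Measure.pi fun _ : K => Po(r)).real {x | ∑ c, x c = Fintype.card ι ∧ ∀ c, x c ∈ A c}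
      ≤ (Measure.pi fun _ : K => Po(r)).real (Set.univ.pi A) :=
        measureReal_mono fun x hx c _ => hx.2 c
    _ = ∏ c, Po(r).real (A c) := by
        simp only [measureReal_def, Measure.pi_pi, ENNReal.toReal_prod]

lemma uniformOn_real_forall_lt_occupancy_le [Nonempty ι] (S : Finset K) (T : ℕ) :
    (uniformOn (Set.univ : Set (ι → K))).real {ω | ∀ c ∈ S, T < occupancy ω c} ≤
      exp 1 * √(Fintype.card ι) *
        exp (-(Po(Fintype.card ι / Fintype.card K).real {T} * #S)) := by
  classical
  set r : ℝ≥0 := Fintype.card ι / Fintype.card K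
  have rate : Fintype.card K * r = Fintype.card ι := mul_div_cancel₀ _ (by simp)
  let A (c : K) : Set ℕ := if c ∈ S then Set.Ioi T else Set.univ
  have event_eq : {ω : ι → K | ∀ c ∈ S, T < occupancy ω c} = {ω | ∀ c, occupancy ω c ∈ A c} := by
    ext ω
    refine forall_congr' fun c => ?_
    by_cases hc : c ∈ S <;> simp [A, hc]
  have prod_le : ∏ c, Po(r).real (A c) ≤ exp (-(Po(r).real {T} * #S)) :=
    calc ∏ c, Po(r).real (A c) = Po(r).real (Set.Ioi T) ^ #S := by
          simp [A, apply_ite, Finset.prod_ite_mem, Finset.prod_const]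
      _ ≤ exp (-Po(r).real {T}) ^ #S := by gcongr; exact poissonMeasure_real_Ioi_le r T
      _ = exp (-(Po(r).real {T} * #S)) := by rw [← exp_nat_mul]; ring_nf
  have poissonized := uniformOn_real_forall_occupancy_mem_mul_le (ι := ι) A r
  rw [rate, ← event_eq] at poissonized
  have total := inv_le_poissonMeasure_real_singleton_self (Fintype.card_ne_zero (α := ι))
  rw [← inv_mul_le_iff₀ (by positivity)]
  calc _ ≤ Po(Fintype.card ι).real {Fintype.card ι} *
        (uniformOn (Set.univ : Set (ι → K))).real {ω | ∀ c ∈ S, T < occupancy ω c} := by gcongr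
    _ ≤ exp (-(Po(r).real {T} * #S)) := by rw [mul_comm]; exact poissonized.trans prod_le

end Poissonization

section Grid

variable {m n : ℕ}

lemma cellMeasure_eq_uniformOn (n : ℕ) : cellMeasure n = uniformOn Set.univ := by
  refine Measure.ext_of_singleton fun c => ?_
  simp [cellMeasure, uniformOn_univ, sq]

lemma gridMeasure_eq_uniformOn (m n : ℕ) : gridMeasure m n = uniformOn Set.univ := by
  rw [gridMeasure, cellMeasure_eq_uniformOn, ← uniformOn_pi, Set.pi_univ]

instance [NeZero n] : IsProbabilityMeasure (cellMeasure n) := by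
  rw [cellMeasure_eq_uniformOn]
  infer_instance

instance [NeZero n] : IsProbabilityMeasure (gridMeasure m n) := by
  rw [gridMeasure_eq_uniformOn]
  infer_instance

lemma assignSum_eq_card (σ : Equiv.Perm (Fin n)) (ω : Fin m → Fin n × Fin n) :
    assignSum σ ω = #{k | (ω k).2 = σ (ω k).1} := by
  have fiberwise := Finset.card_eq_sum_card_fiberwise (f := fun k => (ω k).1)
    (s := {k | (ω k).2 = σ (ω k).1}) (t := Finset.univ) fun _ _ => Finset.mem_univ _
  rw [assignSum, fiberwise, Nat.cast_sum]
  refine Finset.sum_congr rfl fun i _ => congrArg (fun s : Finset (Fin m) => (#s : ℝ)) ?_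
  ext k
  simp only [Finset.mem_filter, Finset.mem_univ, true_and, Prod.ext_iff]
  grind

lemma minAssign_le_assignSum (σ : Equiv.Perm (Fin n)) (ω : Fin m → Fin n × Fin n) :
    minAssign ω ≤ assignSum σ ω :=
  ciInf_le (Set.finite_range _).bddBelow σ

lemma exists_minAssign_eq (ω : Fin m → Fin n × Fin n) : ∃ σ, minAssign ω = assignSum σ ω :=
  (exists_eq_ciInf_of_finite (f := fun σ => assignSum σ ω)).imp fun _ => Eq.symm

lemma minAssign_le_card (ω : Fin m → Fin n × Fin n) : minAssign ω ≤ m := by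
  refine (minAssign_le_assignSum 1 ω).trans ?_
  rw [assignSum_eq_card]
  exact_mod_cast (Finset.card_le_univ _).trans_eq (Fintype.card_fin m)

end Grid

section LowerBound

lemma exp_mul_integral_le_sum_mgf {Ω ι : Type*} [MeasurableSpace Ω] [Fintype ι] {μ : Measure Ω}
    [IsProbabilityMeasure μ] {X : Ω → ℝ} {Y : ι → Ω → ℝ} {t : ℝ} (hX : Integrable X μ)
    (hY : ∀ i, Integrable (fun ω => exp (t * Y i ω)) μ) (hXY : ∀ ω, ∃ i, X ω = Y i ω) :
    exp (t * ∫ ω, X ω ∂μ) ≤ ∑ i, mgf (Y i) μ t := by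
  have le_sum (ω : Ω) : exp (t * X ω) ≤ ∑ i, exp (t * Y i ω) := by
    obtain ⟨i, hi⟩ := hXY ω
    rw [hi]
    exact Finset.single_le_sum (f := fun i => exp (t * Y i ω)) (fun _ _ => (exp_pos _).le)
      (Finset.mem_univ i)
  have sum_integrable : Integrable (fun ω => ∑ i, exp (t * Y i ω)) μ :=
    integrable_finsetSum _ fun i _ => hY i
  have exp_integrable : Integrable (fun ω => exp (t * X ω)) μ :=
    sum_integrable.mono' (continuous_exp.comp_aestronglyMeasurable (hX.1.const_mul t)) <|
      .of_forall fun ω => (norm_of_nonneg (exp_pos _).le).trans_le (le_sum ω)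
  calc exp (t * ∫ ω, X ω ∂μ) = exp (∫ ω, t * X ω ∂μ) := by rw [integral_const_mul]
    _ ≤ ∫ ω, exp (t * X ω) ∂μ :=
        convexOn_exp.map_integral_le continuous_exp.continuousOn isClosed_univ
          (.of_forall fun _ => Set.mem_univ _) (hX.const_mul t) exp_integrable
    _ ≤ ∫ ω, ∑ i, exp (t * Y i ω) ∂μ := integral_mono exp_integrable sum_integrable le_sum
    _ = ∑ i, mgf (Y i) μ t := integral_finsetSum _ fun i _ => hY i

variable {n : ℕ}

lemma cellMeasure_real_graph (σ : Equiv.Perm (Fin n)) :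
    (cellMeasure n).real {c | c.2 = σ c.1} = (n : ℝ)⁻¹ := by
  have graph_eq : {c : Fin n × Fin n | c.2 = σ c.1} =
      Finset.univ.image fun i => (i, σ i) := by
    ext ⟨i, j⟩
    simp [eq_comm]
  rw [cellMeasure, graph_eq, measureReal_ennreal_smul_apply, measureReal_def,
    Measure.count_apply_finset,
    Finset.card_image_of_injective _ fun _ _ h => congrArg Prod.fst h, Finset.card_fin]
  rcases eq_or_ne n 0 with rfl | hn
  · simp
  · simp [field]

lemma mgf_assignSum [NeZero n] (m : ℕ) (σ : Equiv.Perm (Fin n)) (t : ℝ) :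
    mgf (assignSum σ) (gridMeasure m n) t = (1 + (exp t - 1) / n) ^ m := by
  let G : Set (Fin n × Fin n) := {c | c.2 = σ c.1}
  have exp_eq (ω : Fin m → Fin n × Fin n) :
      exp (t * assignSum σ ω) = ∏ k, (1 + G.indicator (fun _ => exp t - 1) (ω k)) := by
    rw [assignSum_eq_card, Finset.card_filter, Nat.cast_sum, Finset.mul_sum, exp_sum]
    refine Finset.prod_congr rfl fun k _ => ?_
    by_cases h : (ω k).2 = σ (ω k).1
    · simp [G, h]
    · simp [G, h]
  simp_rw [mgf, exp_eq, gridMeasure]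
  rw [integral_fintype_prod_eq_pow (fun c => 1 + G.indicator (fun _ => exp t - 1) c),
    Fintype.card_fin, integral_add (integrable_const 1) .of_finite,
    integral_indicator_const _ (Set.toFinite G).measurableSet, cellMeasure_real_graph]
  simp [div_eq_inv_mul]

lemma exp_mul_EminAssign_le [NeZero n] (m : ℕ) (t : ℝ) :
    exp (t * EminAssign m n) ≤ exp (n * log n - m / n * (1 - exp t)) := by
  have one_le : (1 : ℝ) ≤ n := by exact_mod_cast NeZero.pos n
  have factorial_le : (n ! : ℝ) ≤ exp (n * log n) := by
    rw [exp_nat_mul, exp_log (by positivity)]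
    exact_mod_cast Nat.factorial_le_pow n
  have base_nonneg : 0 ≤ 1 + (exp t - 1) / n := by
    field_simp
    linarith [exp_pos t]
  have mgf_le : (1 + (exp t - 1) / n) ^ m ≤ exp (-(m / n * (1 - exp t))) :=
    calc (1 + (exp t - 1) / n) ^ m ≤ exp ((exp t - 1) / n) ^ m := by
          gcongr
          linarith [add_one_le_exp ((exp t - 1) / n)]
      _ = exp (-(m / n * (1 - exp t))) := by
          rw [← exp_nat_mul]
          ring_nf
  calc exp (t * EminAssign m n)
      ≤ ∑ σ, mgf (assignSum σ) (gridMeasure m n) t :=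
        exp_mul_integral_le_sum_mgf .of_finite (fun _ => .of_finite) exists_minAssign_eq
    _ = n ! * (1 + (exp t - 1) / n) ^ m := by simp [mgf_assignSum, Fintype.card_perm]
    _ ≤ exp (n * log n) * exp (-(m / n * (1 - exp t))) := by gcongr
    _ = exp (n * log n - m / n * (1 - exp t)) := by rw [← exp_add, ← sub_eq_add_neg]

lemma le_EminAssign [NeZero n] (m : ℕ) {H : ℝ} (hH0 : 0 < H) (hH1 : H < 1) :
    (m / n * (1 - H) - n * log n) / -log H ≤ EminAssign m n := by
  have h := exp_le_exp.1 (exp_mul_EminAssign_le (n := n) m (log H))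
  rw [exp_log hH0] at h
  rw [div_le_iff₀ (neg_pos.2 (log_neg hH0 hH1))]
  linarith

end LowerBound

section Matching

lemma exists_injective_or_exists_card_lt_add_card {α β : Type*} [Fintype β] (r : α → β → Prop) :
    (∃ f : α → β, f.Injective ∧ ∀ a, r a (f a)) ∨
      ∃ (A : Finset α) (B : Finset β), Fintype.card β < #A + #B ∧ ∀ a ∈ A, ∀ b ∈ B, ¬r a b := by
  classical
  rw [or_iff_not_imp_left, ← Fintype.all_card_le_filter_rel_iff_exists_injective]
  intro not_hall
  obtain ⟨A, hA⟩ := not_forall.1 not_hall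
  let N : Finset β := {b | ∃ a ∈ A, r a b}
  refine ⟨A, Nᶜ, ?_, fun a ha b hb hab => Finset.mem_compl.1 hb ?_⟩
  · rw [Finset.card_compl]
    have : #N ≤ Fintype.card β := N.card_le_univ
    have : #N < #A := not_le.1 hA
    omega
  · exact Finset.mem_filter.2 ⟨Finset.mem_univ b, a, ha, hab⟩

end Matching

section UpperBound

lemma add_sub_add_one_mul_le_four_mul {a b n : ℕ} (hb : b ≤ n) (hab : n < a + b)
    (hn : n ≤ 2 * b) : (a + (n - b) + 1) * n ≤ 4 * (a * b) := by
  have h : a + (n - b) + 1 ≤ 2 * a := by omega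
  calc (a + (n - b) + 1) * n ≤ 2 * a * (2 * b) := Nat.mul_le_mul h hn
    _ = 4 * (a * b) := by ring

lemma sum_pow_card_mul_pow_add {R : Type*} [CommSemiring R] (n : ℕ) (w : R) :
    ∑ s : Finset (Fin n) × Finset (Fin n),
        (w ^ #s.1 * w ^ (n - #s.2) + w ^ (n - #s.1) * w ^ #s.2) = 2 * (1 + w) ^ (2 * n) := by
  have sum_pow_card : ∑ A : Finset (Fin n), w ^ #A = (1 + w) ^ n := by
    simpa [add_comm] using Fin.sum_pow_mul_eq_add_pow (n := n) w 1
  have sum_pow_sub_card : ∑ A : Finset (Fin n), w ^ (n - #A) = (1 + w) ^ n := by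
    simpa using Fin.sum_pow_mul_eq_add_pow (n := n) 1 w
  simp_rw [Finset.sum_add_distrib, Fintype.sum_prod_type, ← Finset.mul_sum, ← Finset.sum_mul,
    sum_pow_card, sum_pow_sub_card]
  ring

/- The exponents on the right are linear in `a` and in `b`, so the sum over all pairs of sets of
sizes `a` and `b` is binomial. -/
lemma exp_neg_mul_mul_le {a b n : ℕ} {p : ℝ} (hp : 0 ≤ p) (ha : a ≤ n) (hb : b ≤ n)
    (hab : n < a + b) :
    exp (-(p * (a * b))) ≤ exp (-(p * n / 4)) *
      (exp (-(p * n / 4)) ^ a * exp (-(p * n / 4)) ^ (n - b) +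
        exp (-(p * n / 4)) ^ (n - a) * exp (-(p * n / 4)) ^ b) := by
  set w := exp (-(p * n / 4)) with hw
  have le_of_mul_le {k : ℕ} (hk : (k + 1) * n ≤ 4 * (a * b)) :
      exp (-(p * (a * b))) ≤ w * w ^ k := by
    have hk' : ((k : ℝ) + 1) * n ≤ 4 * (a * b) := by exact_mod_cast hk
    rw [← pow_succ', hw, ← exp_nat_mul, exp_le_exp]
    push_cast
    nlinarith
  rw [← pow_add, ← pow_add, mul_add]
  rcases le_total n (2 * b) with hn | hn
  · exact (le_of_mul_le (add_sub_add_one_mul_le_four_mul hb hab hn)).trans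
      (le_add_of_nonneg_right (by positivity))
  · refine (le_of_mul_le ?_).trans (le_add_of_nonneg_left (by positivity))
    have := add_sub_add_one_mul_le_four_mul (b := a) (a := b) ha (by omega) (by omega)
    rwa [add_comm b, mul_comm b] at this

variable {n : ℕ}

lemma gridMeasure_real_forall_lt_cellCount_le [NeZero n] {m : ℕ} (hm : m ≠ 0) (T : ℕ)
    (A B : Finset (Fin n)) :
    (gridMeasure m n).real {ω | ∀ i ∈ A, ∀ j ∈ B, T < cellCount i j ω} ≤
      exp 1 * √m * exp (-(Po(m / n ^ 2).real {T} * (#A * #B))) := by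
  have : NeZero m := ⟨hm⟩
  have h := uniformOn_real_forall_lt_occupancy_le (ι := Fin m) (A ×ˢ B) T
  have event_eq : {ω : Fin m → Fin n × Fin n | ∀ i ∈ A, ∀ j ∈ B, T < cellCount i j ω} =
      {ω | ∀ c ∈ A ×ˢ B, T < occupancy ω c} := by
    ext ω
    simp only [Set.mem_ofPred_eq, Finset.mem_product, Prod.forall, and_imp]
    exact forall_congr' fun i => forall_comm
  rw [gridMeasure_eq_uniformOn, event_eq]
  simpa [← sq] using h

lemma gridMeasure_real_not_exists_perm_le [NeZero n] {m : ℕ} (hm : m ≠ 0) (T : ℕ) :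
    (gridMeasure m n).real {ω | ¬∃ σ : Equiv.Perm (Fin n), ∀ i, cellCount i (σ i) ω ≤ T} ≤
      2 * exp 1 * √m * exp (-(Po(m / n ^ 2).real {T} * n / 4)) *
        (1 + exp (-(Po(m / n ^ 2).real {T} * n / 4))) ^ (2 * n) := by
  set p := Po(m / n ^ 2).real {T}
  set w := exp (-(p * n / 4))
  let D : Finset (Finset (Fin n) × Finset (Fin n)) := {s | n < #s.1 + #s.2}
  have bad_subset : {ω : Fin m → Fin n × Fin n | ¬∃ σ : Equiv.Perm (Fin n),
      ∀ i, cellCount i (σ i) ω ≤ T} ⊆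
        ⋃ s ∈ D, {ω | ∀ i ∈ s.1, ∀ j ∈ s.2, T < cellCount i j ω} := by
    intro ω no_perm
    obtain ⟨f, hf, hfT⟩ | ⟨A, B, hAB, hT⟩ :=
      exists_injective_or_exists_card_lt_add_card fun i j => cellCount i j ω ≤ T
    · exact absurd ⟨.ofBijective f (Finite.injective_iff_bijective.1 hf), hfT⟩ no_perm
    · simp only [not_le] at hT
      exact Set.mem_biUnion (x := (A, B)) (by simpa [D] using hAB) hT
  calc _ ≤ ∑ s ∈ D, (gridMeasure m n).real {ω | ∀ i ∈ s.1, ∀ j ∈ s.2, T < cellCount i j ω} :=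
        (measureReal_mono bad_subset (measure_ne_top _ _)).trans (measureReal_biUnion_finset_le _ _)
    _ ≤ ∑ s ∈ D, exp 1 * √m *
          (w * (w ^ #s.1 * w ^ (n - #s.2) + w ^ (n - #s.1) * w ^ #s.2)) := by
        refine Finset.sum_le_sum fun s hs =>
          (gridMeasure_real_forall_lt_cellCount_le hm T s.1 s.2).trans ?_
        gcongr
        exact exp_neg_mul_mul_le measureReal_nonneg (card_finset_fin_le _) (card_finset_fin_le _)
          (Finset.mem_filter.1 hs).2
    _ ≤ ∑ s : Finset (Fin n) × Finset (Fin n), exp 1 * √m *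
          (w * (w ^ #s.1 * w ^ (n - #s.2) + w ^ (n - #s.1) * w ^ #s.2)) :=
        Finset.sum_le_univ_sum_of_nonneg fun _ => by positivity
    _ = 2 * exp 1 * √m * w * (1 + w) ^ (2 * n) := by
        rw [← Finset.mul_sum, ← Finset.mul_sum, sum_pow_card_mul_pow_add]
        ring

lemma EminAssign_le_add_mul_real [NeZero n] (m T : ℕ) :
    EminAssign m n ≤ n * T + m *
      (gridMeasure m n).real {ω | ¬∃ σ : Equiv.Perm (Fin n), ∀ i, cellCount i (σ i) ω ≤ T} := by
  set bad := {ω : Fin m → Fin n × Fin n | ¬∃ σ : Equiv.Perm (Fin n), ∀ i, cellCount i (σ i) ω ≤ T}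
  have minAssign_le (ω : Fin m → Fin n × Fin n) :
      minAssign ω ≤ n * T + bad.indicator (fun _ => (m : ℝ)) ω := by
    by_cases hω : ω ∈ bad
    · rw [Set.indicator_of_mem hω]
      exact (minAssign_le_card ω).trans (le_add_of_nonneg_left (by positivity))
    · obtain ⟨σ, hσ⟩ := not_not.1 hω
      rw [Set.indicator_of_notMem hω, add_zero]
      calc minAssign ω ≤ ∑ i, (cellCount i (σ i) ω : ℝ) := minAssign_le_assignSum σ ω
        _ ≤ ∑ _ : Fin n, (T : ℝ) := Finset.sum_le_sum fun i _ => by exact_mod_cast hσ i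
        _ = n * T := by simp
  calc EminAssign m n ≤ ∫ ω, (n * T + bad.indicator (fun _ => (m : ℝ)) ω) ∂gridMeasure m n :=
        integral_mono .of_finite .of_finite minAssign_le
    _ = n * T + m * (gridMeasure m n).real bad := by
        rw [integral_add .of_finite .of_finite,
          integral_indicator_const _ (Set.toFinite bad).measurableSet]
        simp [mul_comm]

/- The constant is `24 = 4 * 6`: with probability factor `exp (-(p * n / 4))` this is what it takes
to beat `m * √m ≤ n ^ 6`. -/
lemma EminAssign_le_of_log_le [NeZero n] {m T : ℕ} (hm : m ≠ 0) (hmn : m ≤ n ^ 3)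
    (hp : 24 * log n ≤ Po(m / n ^ 2).real {T} * n) :
    EminAssign m n ≤ n * T + 2 * exp 3 := by
  set p := Po(m / n ^ 2).real {T}
  set w := exp (-(p * n / 4))
  have one_le : (1 : ℝ) ≤ n := by exact_mod_cast NeZero.pos n
  have m_le : (m : ℝ) ≤ n ^ 3 := by exact_mod_cast hmn
  have w_mul_le : w * (n : ℝ) ^ 6 ≤ 1 := by
    rw [← exp_log (show (0 : ℝ) < n by positivity), ← exp_nat_mul, ← exp_add, exp_le_one_iff]
    push_cast
    linarith
  have power_le : (1 + w) ^ (2 * n) ≤ exp 2 :=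
    calc (1 + w) ^ (2 * n) ≤ exp w ^ (2 * n) := by
          gcongr
          linarith [add_one_le_exp w]
      _ = exp (2 * (w * n)) := by
          rw [← exp_nat_mul]
          push_cast
          ring_nf
      _ ≤ exp (2 * 1) := by
          gcongr
          exact (mul_le_mul_of_nonneg_left (le_self_pow₀ one_le (by simp)) (exp_pos _).le).trans
            w_mul_le
      _ = exp 2 := by rw [mul_one]
  have m_mul_le : (m : ℝ) * √m * w ≤ 1 :=
    calc (m : ℝ) * √m * w ≤ n ^ 3 * n ^ 3 * w := by
          gcongr
          exact (sqrt_le_self_iff.2 (.inr (Nat.one_le_cast.2 (Nat.one_le_iff_ne_zero.2 hm)))).trans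
            m_le
      _ = w * n ^ 6 := by ring
      _ ≤ 1 := w_mul_le
  calc EminAssign m n
      ≤ n * T + m * (2 * exp 1 * √m * w * (1 + w) ^ (2 * n)) := by
        refine (EminAssign_le_add_mul_real m T).trans ?_
        gcongr
        exact gridMeasure_real_not_exists_perm_le hm T
    _ = n * T + 2 * exp 1 * (m * √m * w) * (1 + w) ^ (2 * n) := by ring
    _ ≤ n * T + 2 * exp 1 * 1 * exp 2 := by gcongr
    _ = n * T + 2 * exp 3 := by rw [mul_one, mul_assoc, ← exp_add]; norm_num

end UpperBound

section LargeDeviations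

lemma tendsto_log_factorial_div_sub_log :
    Tendsto (fun k : ℕ => log k ! / k - log k) atTop (𝓝 (-1)) := by
  have stirling : Tendsto (fun k : ℕ => log (Stirling.stirlingSeq k) / k) atTop (𝓝 0) :=
    (Stirling.tendsto_stirlingSeq_sqrt_pi.log (by positivity)).div_atTop
      tendsto_natCast_atTop_atTop
  have log_div_self : Tendsto (fun k : ℕ => log (2 * k) / (2 * k)) atTop (𝓝 0) :=
    isLittleO_log_id_atTop.tendsto_div_nhds_zero.comp
      (tendsto_natCast_atTop_atTop.const_mul_atTop two_pos)
  have limit := (stirling.add log_div_self).sub_const 1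
  rw [add_zero, zero_sub] at limit
  refine limit.congr' ?_
  filter_upwards [eventually_ne_atTop 0] with k hk
  have hk' : (k : ℝ) ≠ 0 := Nat.cast_ne_zero.2 hk
  rw [Stirling.log_stirlingSeq_formula, log_div hk' (exp_ne_zero 1), log_exp]
  field_simp
  ring

lemma log_poissonMeasure_real_singleton {r : ℝ≥0} (hr : r ≠ 0) (k : ℕ) :
    log (Po(r).real {k}) = -r + k * log r - log k ! := by
  rw [poissonMeasure_real_singleton, log_div (by positivity) (by positivity),
    log_mul (by positivity) (by positivity), log_exp, log_pow]

variable {α : Type*} {l : Filter α} {L : α → ℝ}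

lemma tendsto_log_poissonMeasure_real_singleton_div {r : α → ℝ≥0} {k : α → ℕ} {a b : ℝ}
    (ha : 0 < a) (hb : 0 < b) (hL : Tendsto L l atTop)
    (hr : Tendsto (fun i => r i / L i) l (𝓝 a)) (hk : Tendsto (fun i => k i / L i) l (𝓝 b)) :
    Tendsto (fun i => log (Po(r i).real {k i}) / L i) l (𝓝 (-(a * klFun (b / a)))) := by
  have k_atTop : Tendsto k l atTop := by
    refine tendsto_natCast_atTop_iff.1 ((hk.pos_mul_atTop hb hL).congr' ?_)
    filter_upwards [hL.eventually_ne_atTop 0] with i hi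
    exact div_mul_cancel₀ _ hi
  have log_ratio : Tendsto (fun i => log (r i / L i) - log (k i / L i)) l (𝓝 (log a - log b)) :=
    (hr.log ha.ne').sub (hk.log hb.ne')
  have limit := (hr.neg.add (hk.mul log_ratio)).sub
    (hk.mul (tendsto_log_factorial_div_sub_log.comp k_atTop))
  have limit_eq : -a + b * (log a - log b) - b * -1 = -(a * klFun (b / a)) := by
    rw [klFun_apply, log_div hb.ne' ha.ne']
    field_simp
    ring
  rw [limit_eq] at limit
  refine limit.congr' ?_
  filter_upwards [hL.eventually_gt_atTop 0, hr.eventually_const_lt ha,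
    k_atTop.eventually_ne_atTop 0] with i hLi hri hki
  have r_ne : (r i : ℝ) ≠ 0 := fun h => by simp [h] at hri
  have k_ne : (k i : ℝ) ≠ 0 := Nat.cast_ne_zero.2 hki
  rw [Function.comp_apply, log_poissonMeasure_real_singleton (NNReal.coe_ne_zero.1 r_ne),
    log_div r_ne hLi.ne', log_div k_ne hLi.ne']
  field_simp
  ring

lemma tendsto_div_atTop_of_tendsto_log_div {x : α → ℝ} {d : ℝ} (hd : 0 < d)
    (hL : Tendsto L l atTop) (hx : ∀ᶠ i in l, 0 < x i)
    (hxL : Tendsto (fun i => log (x i) / L i) l (𝓝 d)) :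
    Tendsto (fun i => x i / L i) l atTop := by
  have log_div_self : Tendsto (fun i => log (L i) / L i) l (𝓝 0) :=
    isLittleO_log_id_atTop.tendsto_div_nhds_zero.comp hL
  have limit := hxL.sub log_div_self
  rw [sub_zero] at limit
  refine (tendsto_exp_atTop.comp (limit.pos_mul_atTop hd hL)).congr' ?_
  filter_upwards [hx, hL.eventually_gt_atTop 0] with i hxi hLi
  rw [Function.comp_apply, ← sub_div, div_mul_cancel₀ _ hLi.ne', exp_sub, exp_log hxi, exp_log hLi]

lemma strictAntiOn_klFun : StrictAntiOn klFun (Set.Icc 0 1) := by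
  refine strictAntiOn_of_deriv_neg (convex_Icc 0 1) continuous_klFun.continuousOn fun x hx => ?_
  rw [interior_Icc] at hx
  rw [deriv_klFun]
  exact log_neg hx.1 hx.2

end LargeDeviations

section Asymptotics

variable {m : ℕ → ℕ} {c : ℝ}

lemma tendsto_log_natCast_atTop : Tendsto (fun n : ℕ => log n) atTop atTop :=
  tendsto_log_atTop.comp tendsto_natCast_atTop_atTop

lemma eventually_le_pow_three
    (h : Tendsto (fun n : ℕ => ((m n : ℝ) / (n : ℝ) ^ 2) / log n) atTop (𝓝 c)) :
    ∀ᶠ n in atTop, m n ≤ n ^ 3 := by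
  have log_div_self : Tendsto (fun n : ℕ => log n / n) atTop (𝓝 0) :=
    isLittleO_log_id_atTop.tendsto_div_nhds_zero.comp tendsto_natCast_atTop_atTop
  have ratio := h.mul log_div_self
  rw [mul_zero] at ratio
  filter_upwards [ratio.eventually_lt_const one_pos, eventually_gt_atTop 1] with n hn one_lt
  have one_lt' : (1 : ℝ) < n := Nat.one_lt_cast.2 one_lt
  have log_pos_n := log_pos one_lt'
  have ratio_eq : (m n : ℝ) / n ^ 2 / log n * (log n / n) = m n / n ^ 3 := by field_simp
  rw [ratio_eq, div_lt_one (by positivity)] at hn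
  exact_mod_cast hn.le

lemma eventually_log_le_poissonMeasure_real_mul (hc : 0 < c) {η : ℝ} (hη : 0 < η)
    (hcη : c * klFun η < 1)
    (h : Tendsto (fun n : ℕ => ((m n : ℝ) / (n : ℝ) ^ 2) / log n) atTop (𝓝 c)) (C : ℝ) :
    ∀ᶠ n : ℕ in atTop, C * log n ≤ Po(m n / n ^ 2).real {⌊η * c * log n⌋₊} * n := by
  have threshold : Tendsto (fun n : ℕ => (⌊η * c * log n⌋₊ : ℝ) / log n) atTop (𝓝 (η * c)) :=
    (tendsto_nat_floor_mul_div_atTop (by positivity)).comp tendsto_log_natCast_atTop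
  have rate : Tendsto (fun n : ℕ => ((m n / n ^ 2 : ℝ≥0) : ℝ) / log n) atTop (𝓝 c) := by
    simpa using h
  have log_prob := tendsto_log_poissonMeasure_real_singleton_div hc (mul_pos hη hc)
    tendsto_log_natCast_atTop rate threshold
  rw [mul_div_cancel_right₀ _ hc.ne'] at log_prob
  have prob_pos : ∀ᶠ n : ℕ in atTop, 0 < Po(m n / n ^ 2).real {⌊η * c * log n⌋₊} := by
    filter_upwards [rate.eventually_const_lt hc, eventually_gt_atTop 1] with n hn one_lt
    have log_pos_n := log_pos (Nat.one_lt_cast.2 one_lt)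
    exact poissonMeasure_real_singleton_pos _ ((div_pos_iff_of_pos_right log_pos_n).1 hn)
  have log_mean : Tendsto (fun n : ℕ => log (Po(m n / n ^ 2).real {⌊η * c * log n⌋₊} * n) / log n)
      atTop (𝓝 (-(c * klFun η) + 1)) := by
    refine (log_prob.add_const 1).congr' ?_
    filter_upwards [prob_pos, eventually_gt_atTop 1] with n hn one_lt
    have := log_pos (Nat.one_lt_cast.2 one_lt)
    rw [log_mul hn.ne' (by positivity), add_div, div_self this.ne']
  have mean_atTop := tendsto_div_atTop_of_tendsto_log_div (by linarith) tendsto_log_natCast_atTop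
    (by filter_upwards [prob_pos, eventually_gt_atTop 0] with n hn n_pos using by positivity)
    log_mean
  filter_upwards [mean_atTop.eventually_ge_atTop C, eventually_gt_atTop 1] with n hn one_lt
  exact (le_div_iff₀ (log_pos (Nat.one_lt_cast.2 one_lt))).1 hn

lemma eventually_EminAssign_le (hc : 0 < c) {η : ℝ} (hη : 0 < η) (hcη : c * klFun η < 1)
    (h : Tendsto (fun n : ℕ => ((m n : ℝ) / (n : ℝ) ^ 2) / log n) atTop (𝓝 c)) :
    ∀ᶠ n : ℕ in atTop, EminAssign (m n) n ≤ η * c * n * log n + 2 * exp 3 := by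
  filter_upwards [eventually_log_le_poissonMeasure_real_mul hc hη hcη h 24,
    eventually_le_pow_three h, h.eventually_const_lt hc, eventually_ne_atTop 0]
    with n hp hmn hm hn
  have : NeZero n := ⟨hn⟩
  have m_ne : m n ≠ 0 := fun m_zero => by simp [m_zero] at hm
  calc EminAssign (m n) n ≤ n * ⌊η * c * log n⌋₊ + 2 * exp 3 := EminAssign_le_of_log_le m_ne hmn hp
    _ ≤ n * (η * c * log n) + 2 * exp 3 := by
        gcongr
        exact Nat.floor_le (by positivity)
    _ = η * c * n * log n + 2 * exp 3 := by ring

variable {H : ℝ}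

lemma eventually_EminAssign_div_lt (hc : 0 < c) (hH0 : 0 < H) (hH1 : H < 1)
    (hH : c * klFun H = 1)
    (h : Tendsto (fun n : ℕ => ((m n : ℝ) / (n : ℝ) ^ 2) / log n) atTop (𝓝 c)) {a : ℝ}
    (ha : 1 < a) : ∀ᶠ n : ℕ in atTop, EminAssign (m n) n / (c * H * n * log n) < a := by
  obtain ⟨η, hHη, hη⟩ := exists_between (lt_min hH1 (lt_mul_of_one_lt_left hH0 ha))
  obtain ⟨hη1, hηa⟩ := lt_min_iff.1 hη
  have hη0 : 0 < η := hH0.trans hHη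
  have hcη : c * klFun η < 1 :=
    hH ▸ mul_lt_mul_of_pos_left (strictAntiOn_klFun ⟨hH0.le, hH1.le⟩ ⟨hη0.le, hη1.le⟩ hHη) hc
  have scale : Tendsto (fun n : ℕ => c * H * (n * log n)) atTop atTop :=
    (tendsto_natCast_atTop_atTop.atTop_mul_atTop₀ tendsto_log_natCast_atTop).const_mul_atTop
      (by positivity)
  have bound : Tendsto (fun n : ℕ => η / H + 2 * exp 3 / (c * H * (n * log n))) atTop
      (𝓝 (η / H + 0)) := tendsto_const_nhds.add (tendsto_const_nhds.div_atTop scale)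
  filter_upwards [eventually_EminAssign_le hc hη0 hcη h, scale.eventually_gt_atTop 0,
    bound.eventually_lt_const (by rwa [add_zero, div_lt_iff₀ hH0])] with n hE scale_pos hlt
  refine lt_of_le_of_lt ?_ hlt
  rw [mul_assoc (c * H), div_le_iff₀ scale_pos, add_mul, div_mul_cancel₀ _ scale_pos.ne']
  refine hE.trans_eq ?_
  field_simp

lemma eventually_lt_EminAssign_div (hc : 0 < c) (hH0 : 0 < H) (hH1 : H < 1)
    (hH : c * klFun H = 1)
    (h : Tendsto (fun n : ℕ => ((m n : ℝ) / (n : ℝ) ^ 2) / log n) atTop (𝓝 c)) {a : ℝ}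
    (ha : a < 1) : ∀ᶠ n : ℕ in atTop, a < EminAssign (m n) n / (c * H * n * log n) := by
  have neg_log_pos : 0 < -log H := neg_pos.2 (log_neg hH0 hH1)
  have limit := ((h.mul_const (1 - H)).sub_const 1).div_const (-log H * (c * H))
  have limit_eq : (c * (1 - H) - 1) / (-log H * (c * H)) = 1 := by
    rw [div_eq_one_iff_eq (by positivity)]
    rw [klFun_apply] at hH
    linarith
  rw [limit_eq] at limit
  filter_upwards [limit.eventually_const_lt ha, eventually_gt_atTop 1] with n hn one_lt
  have : NeZero n := ⟨by omega⟩
  have log_pos_n : 0 < log n := log_pos (Nat.one_lt_cast.2 one_lt)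
  refine hn.trans_le ?_
  rw [le_div_iff₀ (by positivity)]
  refine le_trans (le_of_eq ?_) (le_EminAssign (m n) hH0 hH1)
  field_simp

end Asymptotics

/-- **Critical zone, minima.**  If `m(n) n⁻² / log n → c > 1` and `H̃* ∈ (0,1)` is the unique
solution of `H log H - (H - 1) = 1/c`, then
`E[min_σ ∑ i, X_{i σ(i)}] = c H̃* n log n (1 + o(1))`. -/
theorem expected_min_critical (m : ℕ → ℕ) (hm : ∀ n, 0 < m n) (c : ℝ) (hc : 1 < c)
    (h : Tendsto (fun n : ℕ => ((m n : ℝ) / (n : ℝ) ^ 2) / Real.log n) atTop (nhds c))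
    (Hstar : ℝ) (hH0 : 0 < Hstar) (hH1 : Hstar < 1)
    (hHeq : Hstar * Real.log Hstar - (Hstar - 1) = 1 / c)
    (hHuniq : ∀ H : ℝ, 0 < H → H < 1 → H * Real.log H - (H - 1) = 1 / c → H = Hstar) :
    Tendsto (fun n : ℕ => EminAssign (m n) n / (c * Hstar * (n : ℝ) * Real.log n))
      atTop (nhds 1) := by
  have hc0 : 0 < c := one_pos.trans hc
  have hH : c * klFun Hstar = 1 :=
    calc c * klFun Hstar = c * (Hstar * log Hstar - (Hstar - 1)) := by rw [klFun_apply]; ring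
      _ = 1 := by rw [hHeq, mul_one_div_cancel hc0.ne']
  exact tendsto_order.2
    ⟨fun _ => eventually_lt_EminAssign_div hc0 hH0 hH1 hH h,
      fun _ => eventually_EminAssign_div_lt hc0 hH0 hH1 hH h⟩

end
end
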